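/- arXiv:2410.14085 — 5 statements merged into one kernel-verified Lean document; each statement's English description precedes it below -/
import Mathlib

section
/- Let M be a free ℤ-module of finite rank equipped with a symmetric ℤ-valued bilinear form B which is even, i.e. B(x,x) is even for every x ∈ M. Suppose e₁, …, eₙ ∈ M satisfy B(eᵢ,eᵢ) = −2 for all i and B(eᵢ,eⱼ) = 0 for all i ≠ j, and suppose there exists v ∈ M with 2v = e₁ + ⋯ + eₙ. Then n is divisible by 4 and n ≤ rank M. -/
/-!
Expanding the square of `2v = e₁ + ⋯ + eₙ` by orthogonality gives `4 B(v, v) = -2n`; as `B(v, v)`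
is even, `8 ∣ 2n`. Pairing a linear relation among the `eᵢ` with each `eᵢ`, whose square is nonzero,
shows that they are linearly independent.
-/

section Orthogonal

variable {ι R S M N : Type*} [CommSemiring S] [AddCommMonoid N] [Module S N]

theorem apply_sum_self_of_isOrthoᵢ [Fintype ι] [CommSemiring R] [AddCommMonoid M] [Module R M]
    {σ τ : R →+* S} {B : M →ₛₗ[σ] M →ₛₗ[τ] N} {e : ι → M} (he : B.IsOrthoᵢ e) :
    B (∑ i, e i) (∑ i, e i) = ∑ i, B (e i) (e i) := by
  simp only [map_sum, LinearMap.sum_apply]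
  exact Fintype.sum_congr _ _ fun i ↦ Fintype.sum_eq_single i fun _ hji ↦ he hji

theorem sq_nsmul_apply_self_eq_sum_of_isOrthoᵢ [Fintype ι] [CommSemiring R]
    [AddCommMonoid M] [Module R M] {σ τ : R →+* S} {B : M →ₛₗ[σ] M →ₛₗ[τ] N} {e : ι → M}
    (he : B.IsOrthoᵢ e) {m : ℕ} {v : M} (hv : m • v = ∑ i, e i) :
    m ^ 2 • B v v = ∑ i, B (e i) (e i) := by
  rw [← apply_sum_self_of_isOrthoᵢ he, ← hv]
  simp only [map_nsmul, LinearMap.smul_apply, smul_smul, sq]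

theorem linearIndependent_of_isOrthoᵢ_of_isTorsionFree [CommRing R] [AddCommGroup M] [Module R M]
    [IsDomain S] [Module.IsTorsionFree S N] {σ τ : R →+* S} (hσ : Function.Injective σ)
    {B : M →ₛₗ[σ] M →ₛₗ[τ] N} {e : ι → M} (he : B.IsOrthoᵢ e)
    (hne : ∀ i, B (e i) (e i) ≠ 0) :
    LinearIndependent R e := by
  rw [linearIndependent_iff']
  intro s c hc i hi
  have hpair : σ (c i) • B (e i) (e i) = 0 := calc
    σ (c i) • B (e i) (e i) = ∑ j ∈ s, σ (c j) • B (e j) (e i) := by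
      symm
      refine Finset.sum_eq_single_of_mem i hi fun j _ hji ↦ ?_
      rw [show B (e j) (e i) = 0 from he hji, smul_zero]
    _ = B (∑ j ∈ s, c j • e j) (e i) := by
      simp only [map_sum, LinearMap.sum_apply, LinearMap.map_smulₛₗ₂]
    _ = 0 := by rw [hc, map_zero, LinearMap.zero_apply]
  exact (map_eq_zero_iff σ hσ).mp ((smul_eq_zero_iff_left (hne i)).mp hpair)

end Orthogonal

theorem four_dvd_and_le_rank_of_two_divisible_sum_general {ι M : Type*} [Fintype ι]
    [AddCommGroup M] [Module ℤ M] {B : M →ₗ[ℤ] M →ₗ[ℤ] ℤ} {e : ι → M}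
    (hsq : ∀ i, B (e i) (e i) = -2) (horth : B.IsOrthoᵢ e)
    {v : M} (hv : 2 • v = ∑ i, e i) (heven : 2 ∣ B v v) :
    4 ∣ Fintype.card ι ∧ (Fintype.card ι : Cardinal) ≤ Module.rank ℤ M := by
  constructor
  · have hnorm : 4 * B v v = -2 * Fintype.card ι := by
      simpa [hsq, mul_comm] using sq_nsmul_apply_self_eq_sum_of_isOrthoᵢ horth hv
    omega
  · have hli : LinearIndependent ℤ e :=
      linearIndependent_of_isOrthoᵢ_of_isTorsionFree Function.injective_id horth fun i ↦ by
        simp [hsq i]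
    simpa using hli.cardinal_lift_le_rank

/-- Lattice-theoretic content of Lemma 3.1 and Corollary 3.3: in a free ℤ-module `M` of finite
rank with an even symmetric bilinear form `B`, if `e₁, …, eₙ` are pairwise orthogonal vectors
of square `−2` whose sum is twice an element of `M`, then `4 ∣ n` and `n ≤ rank M`. -/
theorem four_dvd_and_le_rank_of_two_divisible_sum
    (M : Type*) [AddCommGroup M] [Module ℤ M] [Module.Free ℤ M] [Module.Finite ℤ M]
    (B : M →ₗ[ℤ] M →ₗ[ℤ] ℤ)
    (hsymm : ∀ x y : M, B x y = B y x)
    (heven : ∀ x : M, (2 : ℤ) ∣ B x x)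
    (n : ℕ) (e : Fin n → M)
    (hsq : ∀ i, B (e i) (e i) = -2)
    (horth : ∀ i j, i ≠ j → B (e i) (e j) = 0)
    (hdiv : ∃ v : M, 2 • v = ∑ i, e i) :
    4 ∣ n ∧ n ≤ Module.finrank ℤ M := by
  obtain ⟨v, hv⟩ := hdiv
  simpa [← Module.finrank_eq_rank] using
    four_dvd_and_le_rank_of_two_divisible_sum_general hsq horth hv (heven v)
end

section
/- Let R be an integral domain of characteristic 2 and let φ, a, ψ, g ∈ R[t] be polynomials in one variable. If (t·φ(t)² + a(t)²)·φ(t)⁴ + ψ(t)⁴ = g(t)⁴ holds in R[t], then φ = 0. -/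
open Polynomial

section CharP

variable {R : Type*} [CommSemiring R] (p : ℕ) [CharP R p] {n : ℕ}

theorem derivative_pow_of_char_dvd (hn : p ∣ n) (f : R[X]) : derivative (f ^ n) = 0 := by
  rw [derivative_pow, (CharP.cast_eq_zero_iff R p n).2 hn, C_0, zero_mul, zero_mul]

theorem derivative_X_mul_pow_of_char_dvd (hn : p ∣ n) (f : R[X]) :
    derivative (X * f ^ n) = f ^ n := by
  rw [derivative_mul, derivative_X, derivative_pow_of_char_dvd p hn, one_mul, mul_zero, add_zero]

end CharP

section CharTwo

variable {R : Type*} [CommSemiring R] [CharP R 2]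

theorem derivative_discriminant (φ a ψ : R[X]) :
    derivative ((X * φ ^ 2 + a ^ 2) * φ ^ 4 + ψ ^ 4) = φ ^ 6 := by
  have separate_squares : (X * φ ^ 2 + a ^ 2) * φ ^ 4 + ψ ^ 4 =
      X * φ ^ 6 + (a * φ ^ 2) ^ 2 + ψ ^ 4 := by
    ring
  rw [separate_squares, derivative_add, derivative_add,
    derivative_X_mul_pow_of_char_dvd 2 (by decide), derivative_pow_of_char_dvd 2 (by decide),
    derivative_pow_of_char_dvd 2 (by decide), add_zero, add_zero]

theorem phi_eq_zero_of_discriminant_fourth_power_general {φ a ψ g : R[X]}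
    (h : (X * φ ^ 2 + a ^ 2) * φ ^ 4 + ψ ^ 4 = g ^ 4) : φ ^ 6 = 0 :=
  calc
    φ ^ 6 = derivative ((X * φ ^ 2 + a ^ 2) * φ ^ 4 + ψ ^ 4) :=
      (derivative_discriminant φ a ψ).symm
    _ = derivative (g ^ 4) := by rw [h]
    _ = 0 := derivative_pow_of_char_dvd 2 (by decide) g

end CharTwo

/-- Key step of Lemma 7.5: over an integral domain `R` of characteristic 2, if
`(t·φ(t)² + a(t)²)·φ(t)⁴ + ψ(t)⁴ = g(t)⁴` in `R[t]`, then `φ = 0`. -/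
theorem phi_eq_zero_of_discriminant_fourth_power
    (R : Type*) [CommRing R] [IsDomain R] [CharP R 2]
    (φ a ψ g : R[X])
    (h : (X * φ ^ 2 + a ^ 2) * φ ^ 4 + ψ ^ 4 = g ^ 4) :
    φ = 0 :=
  eq_zero_of_pow_eq_zero (phi_eq_zero_of_discriminant_fourth_power_general h)
end

section
/- Let V be a vector space over ℚ with a symmetric bilinear form ⟨·,·⟩. Fix natural numbers k ≤ ℓ ≤ 5 and vectors F, s, ξ ∈ V, a family E_{i,j} ∈ V for 1 ≤ i ≤ ℓ and 1 ≤ j ≤ 4, and C_j ∈ V for 1 ≤ j ≤ 20−4ℓ, satisfying: ⟨F,F⟩ = 0, ⟨F,s⟩ = 2, ⟨F,E_{i,j}⟩ = 0 and ⟨F,C_j⟩ = 0 for all indices; ⟨s,s⟩ = −2, ⟨s,E_{i,1}⟩ = 2 for i ≤ k, ⟨s,E_{i,1}⟩ = 0 for i > k, ⟨s,E_{i,j}⟩ = 0 for j ≠ 1, ⟨s,C_j⟩ = 0; ⟨E_{i,j},E_{i,j}⟩ = −2 and distinct vectors E_{i,j} are pairwise orthogonal; ⟨E_{i,j},C_{j'}⟩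 = 0; ⟨C_j,C_j⟩ = −2 and distinct vectors C_j are pairwise orthogonal; ⟨ξ,F⟩ = 2, ⟨ξ,E_{i,j}⟩ = 0 for all i,j, ⟨ξ,C_j⟩ = 1 for all j, and ⟨ξ,ξ⟩ = −2. Suppose ξ = a·F + b·s + Σ_{i,j} α_{i,j}·E_{i,j} + Σ_j β_j·C_j for rational numbers a, b, α_{i,j}, β_j. Then b = 1, α_{i,1} = 1 for i ≤ k, α_{i,j} = 0 for all other pairs (i,j), β_j = −1/2 for all j, and a = (5 − k − ℓ)/2. -/
/-!
Pairing the expansion of `ξ` with the isotropic vector `F` gives `b = 1`, so `ξ - s` is a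
combination of `F` and the orthogonal fiber components. Pairing it with a component gives the
coefficient of that component, and pairing it with `ξ + s`, where
`⟨ξ - s, ξ + s⟩ = ⟨ξ, ξ⟩ - ⟨s, s⟩`, gives the coefficient of `F`.
-/

open Finset
open LinearMap (BilinForm)

section CommSemiring

variable {A V ι κ : Type*} [CommSemiring A] [AddCommMonoid V] [Module A V] {B : BilinForm A V}

lemma isOrthoᵢ_sumElim (hB : B.IsSymm) {R : ι → V} {S : κ → V} (hR : B.IsOrthoᵢ R)
    (hS : B.IsOrthoᵢ S) (hRS : ∀ i j, B (R i) (S j) = 0) : B.IsOrthoᵢ (Sum.elim R S) := by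
  rintro (i | i) (j | j) hij
  · exact hR (ne_of_apply_ne Sum.inl hij)
  · exact hRS i j
  · exact (hB.eq _ _).trans (hRS j i)
  · exact hS (ne_of_apply_ne Sum.inr hij)

variable [Fintype ι] {F s : V} {R : ι → V}

lemma apply_sum_smul_of_isOrthoᵢ (hR : B.IsOrthoᵢ R) (c : ι → A) (i : ι) :
    B (R i) (∑ j, c j • R j) = c i * B (R i) (R i) := by
  simp only [map_sum, map_smul, smul_eq_mul]
  exact Fintype.sum_eq_single i fun j hji ↦ by rw [hR hji.symm, mul_zero]

lemma apply_isotropic_expansion (hFF : B F F = 0) (hFR : ∀ i, B F (R i) = 0) (a b : A)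
    (c : ι → A) : B F (a • F + b • s + ∑ i, c i • R i) = b * B F s := by
  simp [hFF, hFR]

end CommSemiring

lemma apply_add_sub_of_isSymm {A V : Type*} [CommRing A] [AddCommGroup V] [Module A V]
    {B : BilinForm A V} (hB : B.IsSymm) (x y : V) : B (x + y) (x - y) = B x x - B y y := by
  simp only [map_add, map_sub, LinearMap.add_apply, hB.eq y x]
  ring

lemma sum_fin_ite_val_lt {M : Type*} [AddCommMonoid M] {k l : ℕ} (hkl : k ≤ l) (x : M) :
    ∑ i : Fin l, (if (i : ℕ) < k then x else 0) = k • x := by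
  rw [← sum_filter, sum_const, Fin.card_filter_val_lt, min_eq_right hkl]

theorem cusp_expansion_two_section_general {K V ι : Type*} [Field K] [NeZero (2 : K)]
    [AddCommGroup V] [Module K V] [Fintype ι] {B : BilinForm K V} (hB : B.IsSymm)
    {F s ξ : V} {R : ι → V} {a b : K} {c : ι → K}
    (hFF : B F F = 0) (hFs : B F s ≠ 0) (hFξ : B F ξ = B F s) (hFR : ∀ i, B F (R i) = 0)
    (hR : B.IsOrthoᵢ R) (hRR : ∀ i, B (R i) (R i) ≠ 0)
    (hξ : ξ = a • F + b • s + ∑ i, c i • R i) :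
    b = 1 ∧ (∀ i, c i = (B ξ (R i) - B s (R i)) / B (R i) (R i)) ∧
      a = (B ξ ξ - B s s - ∑ i, (B ξ (R i) ^ 2 - B s (R i) ^ 2) / B (R i) (R i)) /
        (2 * B F s) := by
  have hb : b = 1 := by
    rw [hξ, apply_isotropic_expansion hFF hFR] at hFξ
    exact (mul_eq_right₀ hFs).mp hFξ
  have hsub : ξ - s = a • F + ∑ i, c i • R i := by
    rw [hξ, hb]
    module
  have hc (i : ι) : c i = (B ξ (R i) - B s (R i)) / B (R i) (R i) := by
    rw [eq_div_iff (hRR i), ← apply_sum_smul_of_isOrthoᵢ hR, hB.eq ξ, hB.eq s, ← map_sub, hsub,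
      map_add, map_smul, hB.eq (R i) F, hFR, smul_zero, zero_add]
  refine ⟨hb, hc, ?_⟩
  rw [eq_div_iff (mul_ne_zero two_ne_zero hFs), eq_sub_iff_add_eq, eq_comm]
  calc
    B ξ ξ - B s s = B (ξ + s) (a • F + ∑ i, c i • R i) := by
      rw [← hsub, apply_add_sub_of_isSymm hB]
    _ = a * (B ξ F + B s F) + ∑ i, c i * (B ξ (R i) + B s (R i)) := by
      simp only [map_add, map_sum, map_smul, LinearMap.add_apply, smul_eq_mul, mul_add,
        sum_add_distrib]
    _ = a * (2 * B F s) + ∑ i, (B ξ (R i) ^ 2 - B s (R i) ^ 2) / B (R i) (R i) := by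
      rw [hB.eq ξ F, hB.eq s F, hFξ, ← two_mul]
      congr! 2 with i
      rw [hc]
      ring

/-- Linear-algebra form of Proposition 6.2: expansion of the cusp curve `ξ` in the basis
`F, s, E_{i,j}, C_j` of `Pic(X) ⊗ ℚ` for a quasi-elliptic K3 surface with a 2-section `s`,
`ℓ` fibers of type `I₀*` and `20 − 4ℓ` fibers of type `III`. Here `E i 0` plays the role of
the tail `E_{4i−3}` met by `s` (with multiplicity 2) exactly for `i < k`. -/
theorem cusp_expansion_two_section
    (V : Type*) [AddCommGroup V] [Module ℚ V]
    (B : V →ₗ[ℚ] V →ₗ[ℚ] ℚ) (hsymm : ∀ x y : V, B x y = B y x)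
    (k l : ℕ) (hkl : k ≤ l) (hl : l ≤ 5)
    (F s ξ : V) (E : Fin l → Fin 4 → V) (C : Fin (20 - 4 * l) → V)
    (a b : ℚ) (α : Fin l → Fin 4 → ℚ) (β : Fin (20 - 4 * l) → ℚ)
    (hFF : B F F = 0) (hFs : B F s = 2)
    (hFE : ∀ i j, B F (E i j) = 0) (hFC : ∀ j, B F (C j) = 0)
    (hss : B s s = -2)
    (hsE1 : ∀ i : Fin l, (i : ℕ) < k → B s (E i 0) = 2)
    (hsE1' : ∀ i : Fin l, ¬ (i : ℕ) < k → B s (E i 0) = 0)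
    (hsEj : ∀ (i : Fin l) (j : Fin 4), j ≠ 0 → B s (E i j) = 0)
    (hsC : ∀ j, B s (C j) = 0)
    (hEE : ∀ i j, B (E i j) (E i j) = -2)
    (hEE' : ∀ i j i' j', (i, j) ≠ (i', j') → B (E i j) (E i' j') = 0)
    (hEC : ∀ i j j', B (E i j) (C j') = 0)
    (hCC : ∀ j, B (C j) (C j) = -2)
    (hCC' : ∀ j j', j ≠ j' → B (C j) (C j') = 0)
    (hxF : B ξ F = 2)
    (hxE : ∀ i j, B ξ (E i j) = 0)
    (hxC : ∀ j, B ξ (C j) = 1)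
    (hxx : B ξ ξ = -2)
    (hrep : ξ = a • F + b • s + (∑ i, ∑ j, α i j • E i j) + ∑ j, β j • C j) :
    b = 1 ∧ (∀ i : Fin l, (i : ℕ) < k → α i 0 = 1) ∧
      (∀ (i : Fin l) (j : Fin 4), ¬ ((i : ℕ) < k ∧ j = 0) → α i j = 0) ∧
      (∀ j, β j = -1/2) ∧
      a = (5 - (k : ℚ) - (l : ℚ)) / 2 := by
  have hortho : B.IsOrthoᵢ (Sum.elim (fun p : Fin l × Fin 4 ↦ E p.1 p.2) C) :=
    isOrthoᵢ_sumElim ⟨hsymm⟩ (fun p q hpq ↦ hEE' _ _ _ _ hpq) (fun i j hij ↦ hCC' i j hij)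
      fun p ↦ hEC p.1 p.2
  obtain ⟨hb, hc, ha⟩ := cusp_expansion_two_section_general (s := s) (ξ := ξ) (a := a) (b := b)
    (c := Sum.elim (fun p : Fin l × Fin 4 ↦ α p.1 p.2) β) ⟨hsymm⟩ hFF (by simp [hFs])
    (by rw [hsymm, hxF, hFs]) (by simp [hFE, hFC]) hortho (by simp [hEE, hCC])
    (by simpa [Fintype.sum_prod_type, add_assoc] using hrep)
  have hα (i : Fin l) (j : Fin 4) : α i j = B s (E i j) / 2 := by
    simpa [hxE, hEE, neg_div_neg_eq] using hc (.inl (i, j))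
  have hβ (j) : β j = -1 / 2 := by simpa [hxC, hsC, hCC, div_neg, neg_div] using hc (.inr j)
  have hsE (i : Fin l) (j : Fin 4) :
      B s (E i j) = if j = 0 then if (i : ℕ) < k then 2 else 0 else 0 := by grind
  have hsum : ∑ i, ∑ j, B s (E i j) ^ 2 = k * 4 := by
    norm_num [hsE, ite_pow, sum_fin_ite_val_lt hkl]
  refine ⟨hb, fun i hi ↦ by simp [hα, hsE, hi], fun i j hij ↦ by grind, hβ, ?_⟩
  calc
    a = ((20 - 4 * l : ℕ) * 2⁻¹ - k * 4 / 2) / (2 * 2) := by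
      simpa [Fintype.sum_prod_type, hxE, hxC, hsC, hEE, hCC, hss, hxx, hFs, ← sum_div, hsum,
        ← sub_eq_add_neg] using ha
    _ = (5 - (k : ℚ) - (l : ℚ)) / 2 := by
      rw [Nat.cast_sub (by lia)]
      push_cast
      ring
end

section
/- Let V be a vector space over ℚ with a symmetric bilinear form ⟨·,·⟩. Fix a natural number ℓ ≤ 5 and vectors F, s, ξ ∈ V, a family E_{i,j} ∈ V for 1 ≤ i ≤ ℓ and 1 ≤ j ≤ 4, and C_j ∈ V for 1 ≤ j ≤ 20−4ℓ, satisfying: ⟨F,F⟩ = 0, ⟨F,s⟩ = 1, ⟨F,E_{i,j}⟩ = 0 and ⟨F,C_j⟩ = 0 for all indices; ⟨s,s⟩ = −2, ⟨s,E_{i,1}⟩ = 1 for all i, ⟨s,E_{i,j}⟩ = 0 for j ≠ 1, ⟨s,C_j⟩ = 0; ⟨E_{i,j},E_{i,j}⟩ = −2 and distinct vectors E_{i,j} are pairwise orthogonal; ⟨E_{i,j},C_{j'}⟩ = 0; ⟨C_j,C_j⟩ = −2 and distinct vectors C_j are pairwise orthogonal; ⟨ξ,F⟩ = 2, ⟨ξ,E_{i,j}⟩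 = 0 for all i,j, ⟨ξ,C_j⟩ = 1 for all j, and ⟨ξ,ξ⟩ = −2. Suppose ξ = a·F + b·s + Σ_{i,j} α_{i,j}·E_{i,j} + Σ_j β_j·C_j for rational numbers a, b, α_{i,j}, β_j. Then b = 2, α_{i,1} = 1 for all i, α_{i,j} = 0 for j ≠ 1, β_j = −1/2 for all j, and a = 4 − ℓ. -/
/-
Put all fiber components into a single orthogonal family `v k` of `(-2)`-vectors. Pairing
`ξ = a F + b s + ∑ c k v k` with `F` isolates `b`, and pairing it with `v k` gives
`2 c k = b (s · v k) - ξ · v k`. Eliminating the `c k` from `ξ · ξ` leaves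
`2 ξ² = 4ab + 2b² s² + ∑ (b² (s · v k)² - (ξ · v k)²)`, in which `a` is the only unknown once
`b = 2`.
-/

section Semiring

variable {R V : Type*} [CommSemiring R] [AddCommMonoid V] [Module R V]
  {B : LinearMap.BilinForm R V}

theorem iIsOrtho_sumElim {ι κ : Type*} (hB : B.IsSymm) {v : ι → V} {w : κ → V}
    (hv : B.iIsOrtho v) (hw : B.iIsOrtho w) (hvw : ∀ i j, B (v i) (w j) = 0) :
    B.iIsOrtho (Sum.elim v w) := by
  rintro (i | i) (j | j) hij
  · exact hv (by simpa using hij)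
  · exact hvw i j
  · exact (hB.eq _ _).trans (hvw j i)
  · exact hw (by simpa using hij)

variable {ι : Type*} [Fintype ι] {v : ι → V}

theorem bilin_sum_smul_of_iIsOrtho (hv : B.iIsOrtho v) (c : ι → R) (k : ι) :
    B (∑ i, c i • v i) (v k) = c k * B (v k) (v k) := by
  simp only [map_sum, map_smul, LinearMap.sum_apply, LinearMap.smul_apply, smul_eq_mul]
  exact Fintype.sum_eq_single k fun i hik => by
    rw [LinearMap.BilinForm.iIsOrtho_def.1 hv i k hik, mul_zero]

variable {F s ξ : V} {a b : R} {c : ι → R}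

theorem bilin_fiber_eq_section_coeff (hB : B.IsSymm) (hFF : B F F = 0) (hFs : B F s = 1)
    (hFv : ∀ k, B F (v k) = 0) (hξ : ξ = a • F + b • s + ∑ k, c k • v k) :
    B ξ F = b := by
  rw [hB.eq, hξ]
  simp [hFF, hFs, hFv]

theorem bilin_component_eq (hFv : ∀ k, B F (v k) = 0) (hv : B.iIsOrtho v)
    (hξ : ξ = a • F + b • s + ∑ k, c k • v k) (k : ι) :
    B ξ (v k) = b * B s (v k) + c k * B (v k) (v k) := by
  simp only [hξ, map_add, map_smul, LinearMap.add_apply, LinearMap.smul_apply, smul_eq_mul, hFv,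
    mul_zero, zero_add, bilin_sum_smul_of_iIsOrtho hv]

theorem bilin_self_eq (hB : B.IsSymm) (hFF : B F F = 0) (hFs : B F s = 1)
    (hFv : ∀ k, B F (v k) = 0) (hξ : ξ = a • F + b • s + ∑ k, c k • v k) :
    B ξ ξ = 2 * a * b + b ^ 2 * B s s + ∑ k, c k * (b * B s (v k) + B ξ (v k)) := by
  have pairing (x : V) : B x ξ = a * B x F + b * B x s + ∑ k, c k * B x (v k) := by
    simp [hξ]
  have hξF : B ξ F = b := bilin_fiber_eq_section_coeff hB hFF hFs hFv hξ
  have hξs : B ξ s = a + b * B s s + ∑ k, c k * B s (v k) := by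
    rw [hB.eq, pairing s, hB.eq s F, hFs, mul_one]
  calc B ξ ξ = a * b + b * (a + b * B s s + ∑ k, c k * B s (v k)) + ∑ k, c k * B ξ (v k) := by
        rw [pairing ξ, hξF, hξs]
    _ = 2 * a * b + b ^ 2 * B s s + ∑ k, c k * (b * B s (v k) + B ξ (v k)) := by
        simp only [mul_add, Finset.mul_sum, Finset.sum_add_distrib, mul_left_comm _ b]
        ring

end Semiring

section NegTwo

variable {R V ι : Type*} [CommRing R] [AddCommGroup V] [Module R V] [Fintype ι]
  {B : LinearMap.BilinForm R V} {F s ξ : V} {v : ι → V} {a b : R} {c : ι → R}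

theorem two_mul_component_coeff_eq (hFv : ∀ k, B F (v k) = 0) (hv : B.iIsOrtho v)
    (hξ : ξ = a • F + b • s + ∑ k, c k • v k) {k : ι} (hvk : B (v k) (v k) = -2) :
    2 * c k = b * B s (v k) - B ξ (v k) := by
  rw [bilin_component_eq hFv hv hξ k, hvk]
  ring

theorem two_mul_bilin_self_eq (hB : B.IsSymm) (hFF : B F F = 0) (hFs : B F s = 1)
    (hFv : ∀ k, B F (v k) = 0) (hv : B.iIsOrtho v) (hvv : ∀ k, B (v k) (v k) = -2)
    (hξ : ξ = a • F + b • s + ∑ k, c k • v k) :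
    2 * B ξ ξ =
      4 * a * b + 2 * b ^ 2 * B s s + ∑ k, (b ^ 2 * B s (v k) ^ 2 - B ξ (v k) ^ 2) := by
  have hterm (k : ι) : 2 * (c k * (b * B s (v k) + B ξ (v k))) =
      b ^ 2 * B s (v k) ^ 2 - B ξ (v k) ^ 2 := by
    rw [← mul_assoc, two_mul_component_coeff_eq hFv hv hξ (hvv k)]
    ring
  rw [bilin_self_eq hB hFF hFs hFv hξ, mul_add, Finset.mul_sum,
    Finset.sum_congr rfl fun k _ => hterm k]
  ring

end NegTwo

theorem cusp_expansion_section_general {K V ι J κ : Type*} [Field K] [NeZero (2 : K)]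
    [AddCommGroup V] [Module K V] [Fintype ι] [Fintype J] [Fintype κ]
    {B : LinearMap.BilinForm K V} (hB : B.IsSymm)
    {F s ξ : V} {E : ι → J → V} {j₀ : J} {C : κ → V}
    {a b : K} {α : ι → J → K} {β : κ → K}
    (hFF : B F F = 0) (hFs : B F s = 1)
    (hFE : ∀ i j, B F (E i j) = 0) (hFC : ∀ j, B F (C j) = 0)
    (hss : B s s = -2)
    (hsE : ∀ i, B s (E i j₀) = 1) (hsE' : ∀ i j, j ≠ j₀ → B s (E i j) = 0)
    (hsC : ∀ j, B s (C j) = 0)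
    (hEE : ∀ i j, B (E i j) (E i j) = -2) (hE : B.iIsOrtho (Function.uncurry E))
    (hEC : ∀ i j k, B (E i j) (C k) = 0)
    (hCC : ∀ j, B (C j) (C j) = -2) (hC : B.iIsOrtho C)
    (hξF : B ξ F = 2) (hξE : ∀ i j, B ξ (E i j) = 0) (hξC : ∀ j, B ξ (C j) = 1)
    (hξξ : B ξ ξ = -2)
    (hξ : ξ = a • F + b • s + (∑ i, ∑ j, α i j • E i j) + ∑ j, β j • C j) :
    b = 2 ∧ (∀ i, α i j₀ = 1) ∧ (∀ i j, j ≠ j₀ → α i j = 0) ∧ (∀ j, β j = -1 / 2) ∧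
      a = (12 - 4 * Fintype.card ι + Fintype.card κ) / 8 := by
  let v : ι × J ⊕ κ → V := Sum.elim (Function.uncurry E) C
  let c : ι × J ⊕ κ → K := Sum.elim (Function.uncurry α) β
  have hv : B.iIsOrtho v := iIsOrtho_sumElim hB hE hC fun p k => hEC p.1 p.2 k
  have hvv : ∀ k, B (v k) (v k) = -2 := Sum.rec (fun p => hEE p.1 p.2) hCC
  have hFv : ∀ k, B F (v k) = 0 := Sum.rec (fun p => hFE p.1 p.2) hFC
  have hξv : ξ = a • F + b • s + ∑ k, c k • v k := by
    simp [hξ, v, c, Fintype.sum_sum_type, Fintype.sum_prod_type, add_assoc]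
  have hb : b = 2 := (bilin_fiber_eq_section_coeff hB hFF hFs hFv hξv).symm.trans hξF
  have hc (k : ι × J ⊕ κ) : 2 * c k = 2 * B s (v k) - B ξ (v k) :=
    hb ▸ two_mul_component_coeff_eq hFv hv hξv (hvv k)
  have hα (i : ι) (j : J) : α i j = B s (E i j) :=
    mul_left_cancel₀ two_ne_zero <| (hc (.inl (i, j))).trans (by simp [v, hξE])
  have hβ (j : κ) : 2 * β j = -1 := (hc (.inr j)).trans (by simp [v, hsC, hξC])
  have hsE_sq (i : ι) : ∑ j, B s (E i j) ^ 2 = 1 := by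
    rw [Fintype.sum_eq_single j₀ fun j hj => by rw [hsE' i j hj, zero_pow two_ne_zero], hsE,
      one_pow]
  have hsum : ∑ k, (2 ^ 2 * B s (v k) ^ 2 - B ξ (v k) ^ 2) =
      (Fintype.card ι : K) * 4 - Fintype.card κ := by
    norm_num [v, Fintype.sum_sum_type, Fintype.sum_prod_type, hξE, hsC, hξC, ← Finset.mul_sum,
      hsE_sq, sub_eq_add_neg]
  have ha : 2 * (-2) = 8 * a - 16 + ((Fintype.card ι : K) * 4 - Fintype.card κ) := by
    have h := two_mul_bilin_self_eq hB hFF hFs hFv hv hvv hξv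
    rw [hξξ, hb, hss, hsum] at h
    linear_combination h
  have h8 : (8 : K) ≠ 0 := by
    rw [show (8 : K) = 2 ^ 3 by norm_num]
    exact pow_ne_zero 3 two_ne_zero
  refine ⟨hb, fun i => (hα i j₀).trans (hsE i), fun i j hj => (hα i j).trans (hsE' i j hj),
    fun j => (eq_div_iff two_ne_zero).2 (by rw [mul_comm, hβ]), (eq_div_iff h8).2 ?_⟩
  linear_combination -ha

/-- Linear-algebra form of Proposition 6.5: expansion of the cusp curve `ξ` in the basis
`F, s, E_{i,j}, C_j` of `Pic(X) ⊗ ℚ` for a quasi-elliptic K3 surface with a section `s`,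
`ℓ` fibers of type `I₀*` and `20 − 4ℓ` fibers of type `III`. Here `E i 0` plays the role of
the tail `E_{4i−3}` met by the section `s`. -/
theorem cusp_expansion_section
    (V : Type*) [AddCommGroup V] [Module ℚ V]
    (B : V →ₗ[ℚ] V →ₗ[ℚ] ℚ) (hsymm : ∀ x y : V, B x y = B y x)
    (l : ℕ) (hl : l ≤ 5)
    (F s ξ : V) (E : Fin l → Fin 4 → V) (C : Fin (20 - 4 * l) → V)
    (a b : ℚ) (α : Fin l → Fin 4 → ℚ) (β : Fin (20 - 4 * l) → ℚ)
    (hFF : B F F = 0) (hFs : B F s = 1)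
    (hFE : ∀ i j, B F (E i j) = 0) (hFC : ∀ j, B F (C j) = 0)
    (hss : B s s = -2)
    (hsE1 : ∀ i : Fin l, B s (E i 0) = 1)
    (hsEj : ∀ (i : Fin l) (j : Fin 4), j ≠ 0 → B s (E i j) = 0)
    (hsC : ∀ j, B s (C j) = 0)
    (hEE : ∀ i j, B (E i j) (E i j) = -2)
    (hEE' : ∀ i j i' j', (i, j) ≠ (i', j') → B (E i j) (E i' j') = 0)
    (hEC : ∀ i j j', B (E i j) (C j') = 0)
    (hCC : ∀ j, B (C j) (C j) = -2)
    (hCC' : ∀ j j', j ≠ j' → B (C j) (C j') = 0)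
    (hxF : B ξ F = 2)
    (hxE : ∀ i j, B ξ (E i j) = 0)
    (hxC : ∀ j, B ξ (C j) = 1)
    (hxx : B ξ ξ = -2)
    (hrep : ξ = a • F + b • s + (∑ i, ∑ j, α i j • E i j) + ∑ j, β j • C j) :
    b = 2 ∧ (∀ i : Fin l, α i 0 = 1) ∧
      (∀ (i : Fin l) (j : Fin 4), j ≠ 0 → α i j = 0) ∧
      (∀ j, β j = -1/2) ∧
      a = 4 - (l : ℚ) := by
  obtain ⟨hb, hα₀, hα, hβ, ha⟩ := cusp_expansion_section_general ⟨hsymm⟩ hFF hFs hFE hFC hss hsE1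
    hsEj hsC hEE (fun _ _ h => hEE' _ _ _ _ h) hEC hCC (fun _ _ h => hCC' _ _ h) hxF hxE hxC hxx
    hrep
  refine ⟨hb, hα₀, hα, hβ, ?_⟩
  rw [ha, Fintype.card_fin, Fintype.card_fin, Nat.cast_sub (by omega)]
  push_cast
  ring
end

section
/- Let Λ = ℤ²² equipped with the symmetric bilinear form given by the block-diagonal Gram matrix G = diag(U(2), G'), where U(2) is the 2×2 matrix [[0,2],[2,0]] and G' is the 20×20 matrix with G'ᵢᵢ = −2 for 1 ≤ i ≤ 19, G'ᵢⱼ = 0 for distinct i, j ≤ 19, G'ᵢ,₂₀ = G'₂₀,ᵢ = −1 for i ≤ 19, and G'₂₀,₂₀ = −10. Then for n = 8 and for n = 16 there do not exist vectors e₁,…,eₙ ∈ Λ with ⟨eᵢ,eᵢ⟩ = −2 for all i and ⟨eᵢ,eⱼ⟩ = 0 for all i ≠ j, such that e₁ + ⋯ + eₙ = 2v for some v ∈ Λ. -/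
/-- Gram matrix of the even lattice `U(2) ⊕ Ã₁²⁰` (indices 0,1: the hyperbolic plane scaled
by 2; indices 2,…,20: the vectors `e₁,…,e₁₉` of square `−2`; index 21: the vector
`δ = ½(e₁ + ⋯ + e₂₀)` of square `−10`, with `eᵢ·δ = −1`). By Rudakov–Shafarevich this is the
Picard lattice of a supersingular K3 surface in characteristic 2 with Artin invariant 10. -/
def artin10Gram : Matrix (Fin 22) (Fin 22) ℤ := fun i j =>
  if (i = 0 ∧ j = 1) ∨ (i = 1 ∧ j = 0) then 2
  else if i = j ∧ 2 ≤ (i : ℕ) ∧ (i : ℕ) ≤ 20 then -2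
  else if i = 21 ∧ j = 21 then -10
  else if (i = 21 ∧ 2 ≤ (j : ℕ) ∧ (j : ℕ) ≤ 20) ∨ (j = 21 ∧ 2 ≤ (i : ℕ) ∧ (i : ℕ) ≤ 20)
    then -1
  else 0

/-- The bilinear pairing on `ℤ²²` given by the Gram matrix `artin10Gram`. -/
def artin10Pair (x y : Fin 22 → ℤ) : ℤ := ∑ i, ∑ j, x i * artin10Gram i j * y j

/-! If pairwise orthogonal vectors `e₁, …, eₙ` of square `-2` sum to `2v`, then `v · eⱼ = -1` and
`v² = -n/2`. Modulo `2` the pairing of `Λ = U(2) ⊕ Ã₁²⁰` has rank two, so that `Λ / 2Λ^∨` is a plane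
over `𝔽₂`, on which `x²/2` induces the anisotropic form `s² + st + t²`. As `v · eⱼ` is odd, `v` is
nonzero in this plane; hence `v²/2 = -n/4` is odd, which forces `n ≡ 4` modulo `8`. -/

open LinearMap (BilinForm)

section HalfSum

variable {R M ι : Type*} [CommRing R] [AddCommGroup M] [Module R M] [Fintype ι]
  {B : BilinForm R M} {e : ι → M} {v : M}

theorem apply_sum_left_of_iIsOrtho (he : B.iIsOrtho e) (j : ι) :
    B (∑ i, e i) (e j) = B (e j) (e j) := by
  rw [map_sum, LinearMap.sum_apply]
  exact Fintype.sum_eq_single j fun i hij => he hij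

theorem two_mul_apply_of_sum_eq_two_nsmul (he : B.iIsOrtho e) (hv : ∑ i, e i = 2 • v) (j : ι) :
    2 * B v (e j) = B (e j) (e j) := by
  rw [← apply_sum_left_of_iIsOrtho he j, hv, map_nsmul, LinearMap.smul_apply, nsmul_eq_mul,
    Nat.cast_ofNat]

theorem four_mul_apply_self_of_sum_eq_two_nsmul (he : B.iIsOrtho e) (hv : ∑ i, e i = 2 • v) :
    4 * B v v = ∑ j, B (e j) (e j) :=
  calc 4 * B v v = 2 * B v (2 • v) := by rw [map_nsmul, nsmul_eq_mul]; push_cast; ring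
    _ = ∑ j, 2 * B v (e j) := by rw [← hv, map_sum, Finset.mul_sum]
    _ = ∑ j, B (e j) (e j) :=
      Finset.sum_congr rfl fun j _ => two_mul_apply_of_sum_eq_two_nsmul he hv j

end HalfSum

theorem card_modEq_four_of_sum_eq_two_nsmul {M ι : Type*} [AddCommGroup M] [Fintype ι] [Nonempty ι]
    {B : BilinForm ℤ M} (hB : ∀ x y, Odd (B x y) → B x x ≡ 2 [ZMOD 4]) {e : ι → M} {v : M}
    (he : B.iIsOrtho e) (hroot : ∀ i, B (e i) (e i) = -2) (hv : ∑ i, e i = 2 • v) :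
    Fintype.card ι ≡ 4 [MOD 8] := by
  obtain ⟨j⟩ := ‹Nonempty ι›
  have hvj : B v (e j) = -1 := by
    linarith [two_mul_apply_of_sum_eq_two_nsmul he hv j, hroot j]
  have hvv : 4 * B v v = -2 * Fintype.card ι := by
    simp [four_mul_apply_self_of_sum_eq_two_nsmul he hv, hroot, mul_comm]
  have hmod : B v v ≡ 2 [ZMOD 4] := hB v (e j) (by rw [hvj]; decide)
  unfold Int.ModEq at hmod
  unfold Nat.ModEq
  omega

theorem sum_pow_prime_modEq {ι : Type*} (p : ℕ) [Fact p.Prime] (s : Finset ι) (f : ι → ℤ) :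
    ∑ i ∈ s, f i ^ p ≡ (∑ i ∈ s, f i) ^ p [ZMOD p] := by
  rw [← ZMod.intCast_eq_intCast_iff]
  push_cast
  exact (sum_pow_char p s _).symm

theorem odd_sq_add_mul_add_sq_iff {a b : ℤ} : Odd (a ^ 2 + a * b + b ^ 2) ↔ Odd a ∨ Odd b := by
  simp only [← Int.not_even_iff_odd, Int.even_add, Int.even_mul, Int.even_pow]
  tauto

theorem sum_fin_22_eq_add_sum_Icc {M : Type*} [AddCommMonoid M] (f : Fin 22 → M) :
    ∑ i, f i = f 0 + f 1 + ∑ k ∈ Finset.Icc 2 20, f k + f 21 := by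
  have huniv : (Finset.univ : Finset (Fin 22)) =
      insert 0 (insert 1 (insert 21 (Finset.Icc 2 20))) := by decide
  rw [huniv, Finset.sum_insert (by decide), Finset.sum_insert (by decide),
    Finset.sum_insert (by decide)]
  abel

/-- The sum of the coefficients of `x` at the generators `e₁, …, e₁₉`. Together with `x 21`, the
coefficient at `δ`, it determines the class of `x` modulo `2Λ^∨`. -/
def artin10RootSum (x : Fin 22 → ℤ) : ℤ := ∑ k ∈ Finset.Icc 2 20, x k

theorem artin10Gram_row_zero (y : Fin 22 → ℤ) : ∑ j, artin10Gram 0 j * y j = 2 * y 1 := by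
  have hentry (j : Fin 22) : artin10Gram 0 j = if j = 1 then 2 else 0 := by decide +revert
  simp [hentry]

theorem artin10Gram_row_one (y : Fin 22 → ℤ) : ∑ j, artin10Gram 1 j * y j = 2 * y 0 := by
  have hentry (j : Fin 22) : artin10Gram 1 j = if j = 0 then 2 else 0 := by decide +revert
  simp [hentry]

theorem artin10Gram_row_root {k : Fin 22} (hk : k ∈ Finset.Icc 2 20) (y : Fin 22 → ℤ) :
    ∑ j, artin10Gram k j * y j = -2 * y k - y 21 := by
  have hentry : ∀ (k : Finset.Icc (2 : Fin 22) 20) (j : Fin 22),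
      artin10Gram k j = (if j = k then -2 else 0) - if j = 21 then 1 else 0 := by decide
  simp [hentry ⟨k, hk⟩, sub_mul]

theorem artin10Gram_row_last (y : Fin 22 → ℤ) :
    ∑ j, artin10Gram 21 j * y j = -artin10RootSum y - 10 * y 21 := by
  have hentry (j : Fin 22) : artin10Gram 21 j =
      -(if j ∈ Finset.Icc (2 : Fin 22) 20 then 1 else 0) - if j = 21 then 10 else 0 := by
    decide +revert
  simp [hentry, sub_mul, artin10RootSum, -Finset.mem_Icc, Finset.sum_ite_mem]

theorem artin10Pair_eq (x y : Fin 22 → ℤ) :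
    artin10Pair x y = 2 * (x 0 * y 1 + x 1 * y 0) - 2 * ∑ k ∈ Finset.Icc 2 20, x k * y k
      - x 21 * artin10RootSum y - y 21 * artin10RootSum x - 10 * x 21 * y 21 := by
  have hroots : ∑ k ∈ Finset.Icc 2 20, x k * ∑ j, artin10Gram k j * y j =
      -2 * ∑ k ∈ Finset.Icc 2 20, x k * y k - y 21 * artin10RootSum x := by
    rw [artin10RootSum, Finset.mul_sum, Finset.mul_sum, ← Finset.sum_sub_distrib]
    exact Finset.sum_congr rfl fun k hk => by rw [artin10Gram_row_root hk]; ring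
  calc artin10Pair x y = ∑ i, x i * ∑ j, artin10Gram i j * y j := by
        simp only [artin10Pair, Finset.mul_sum, mul_assoc]
    _ = x 0 * (2 * y 1) + x 1 * (2 * y 0)
        + (-2 * ∑ k ∈ Finset.Icc 2 20, x k * y k - y 21 * artin10RootSum x)
        + x 21 * (-artin10RootSum y - 10 * y 21) := by
      rw [sum_fin_22_eq_add_sum_Icc, hroots, artin10Gram_row_zero, artin10Gram_row_one,
        artin10Gram_row_last]
    _ = _ := by ring

theorem artin10Pair_modEq_two (x y : Fin 22 → ℤ) :
    artin10Pair x y ≡ artin10RootSum x * y 21 + x 21 * artin10RootSum y [ZMOD 2] := by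
  rw [artin10Pair_eq, Int.modEq_iff_dvd]
  exact ⟨x 21 * artin10RootSum y + y 21 * artin10RootSum x + 5 * x 21 * y 21
    - (x 0 * y 1 + x 1 * y 0) + ∑ k ∈ Finset.Icc 2 20, x k * y k, by ring⟩

theorem artin10Pair_self_modEq_four (x : Fin 22 → ℤ) :
    artin10Pair x x ≡
      2 * (artin10RootSum x ^ 2 + artin10RootSum x * x 21 + x 21 ^ 2) [ZMOD 4] := by
  have hsq : ∑ k ∈ Finset.Icc 2 20, x k ^ 2 ≡ artin10RootSum x ^ 2 [ZMOD 2] :=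
    sum_pow_prime_modEq 2 _ _
  obtain ⟨c, hc⟩ := hsq.dvd
  simp only [pow_two] at hc
  rw [artin10Pair_eq, Int.modEq_iff_dvd]
  refine ⟨c + ∑ k ∈ Finset.Icc 2 20, x k * x k + artin10RootSum x * x 21 + 3 * x 21 ^ 2
    - x 0 * x 1, ?_⟩
  linear_combination 2 * hc

theorem artin10Pair_self_modEq_two_of_odd {x y : Fin 22 → ℤ} (h : Odd (artin10Pair x y)) :
    artin10Pair x x ≡ 2 [ZMOD 4] := by
  have hclass : Odd (artin10RootSum x) ∨ Odd (x 21) := by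
    rw [Int.odd_iff, artin10Pair_modEq_two, ← Int.odd_iff] at h
    contrapose! h
    simp only [Int.not_odd_iff_even] at h ⊢
    exact (h.1.mul_right _).add (h.2.mul_right _)
  obtain ⟨c, hc⟩ := odd_sq_add_mul_add_sq_iff.mpr hclass
  calc artin10Pair x x ≡ 2 * (2 * c + 1) [ZMOD 4] := hc ▸ artin10Pair_self_modEq_four x
    _ ≡ 2 [ZMOD 4] := Int.modEq_iff_dvd.mpr ⟨-c, by ring⟩

theorem no_two_divisible_A1_8_or_16_in_artin10_general {ι : Type*} [Fintype ι] [Nonempty ι]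
    {e : ι → Fin 22 → ℤ} {v : Fin 22 → ℤ} (hroot : ∀ i, artin10Pair (e i) (e i) = -2)
    (horth : ∀ i j, i ≠ j → artin10Pair (e i) (e j) = 0) (hv : ∑ i, e i = 2 • v) :
    Fintype.card ι ≡ 4 [MOD 8] := by
  simp only [artin10Pair, ← Matrix.toBilin'_apply] at hroot horth
  refine card_modEq_four_of_sum_eq_two_nsmul (B := Matrix.toBilin' artin10Gram) (fun x y h => ?_)
    horth hroot hv
  rw [Matrix.toBilin'_apply] at h ⊢
  exact artin10Pair_self_modEq_two_of_odd h

/-- Lattice-theoretic statement of Section 9: in the Picard lattice `U(2) ⊕ Ã₁²⁰` of a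
supersingular K3 surface of Artin invariant `σ = 10` in characteristic 2, for `n = 8` and
`n = 16` there is no family of `n` pairwise orthogonal vectors of square `−2` whose sum is
divisible by 2. -/
theorem no_two_divisible_A1_8_or_16_in_artin10 :
    ∀ n : ℕ, n = 8 ∨ n = 16 →
      ¬ ∃ e : Fin n → (Fin 22 → ℤ),
        (∀ i, artin10Pair (e i) (e i) = -2) ∧
        (∀ i j, i ≠ j → artin10Pair (e i) (e j) = 0) ∧
        ∃ v : Fin 22 → ℤ, ∑ i, e i = 2 • v := by
  rintro n (rfl | rfl) ⟨e, hroot, horth, v, hv⟩ <;>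
    exact absurd (no_two_divisible_A1_8_or_16_in_artin10_general hroot horth hv) (by decide)
end
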